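/- There does not exist T ∈ (0,1) such that both Z(T) and F(T) = −T log₂ Z(T) are computable real numbers. -/

import Mathlib

open Filter

/-- A real number `α` is computable if some total recursive `f : ℕ+ → ℚ`
satisfies `|α - f n| < 1/n` for all `n`. -/
def ComputableReal (α : ℝ) : Prop :=
  ∃ f : ℕ+ → ℚ, Computable f ∧ ∀ n : ℕ+, |α - (f n : ℝ)| < 1 / (n : ℝ)

/-- A partial function on binary strings has prefix-free domain. -/
def PrefixFree (C : List Bool →. List Bool) : Prop :=
  ∀ p q : List Bool, (C p).Dom → (C q).Dom → p <+: q → p = q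

/-- `U` is an optimal prefix-free machine (universal self-delimiting Turing machine). -/
def OptimalMachine (U : List Bool →. List Bool) : Prop :=
  Partrec U ∧ PrefixFree U ∧
    ∀ C : List Bool →. List Bool, Partrec C → PrefixFree C →
      ∃ d : ℕ, ∀ p s, s ∈ C p → ∃ p', s ∈ U p' ∧ p'.length ≤ p.length + d

/-- Program-size (prefix-free Kolmogorov) complexity of `s` with respect to `U`. -/
noncomputable def complexity (U : List Bool →. List Bool) (s : List Bool) : ℕ :=
  sInf {n | ∃ p : List Bool, p.length = n ∧ s ∈ U p}

/-- The `i`-th bit (0-indexed) of the base-two expansion of the fractional part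
of `α`, in the expansion with infinitely many zeros. -/
noncomputable def bitOf (α : ℝ) (i : ℕ) : Bool := decide (⌊Int.fract α * 2 ^ (i + 1)⌋ % 2 = 1)

/-- The first `n` bits of the base-two expansion of `α - ⌊α⌋`
(with infinitely many zeros). -/
noncomputable def firstBits (α : ℝ) (n : ℕ) : List Bool := (List.range n).map (bitOf α)

/-- `α` is weakly Chaitin `T`-random: `∃ c, ∀ n, T·n − c ≤ H(α_n)`. -/
def WeaklyChaitinTRandom (U : List Bool →. List Bool) (T α : ℝ) : Prop :=
  ∃ c : ℕ, ∀ n : ℕ+, T * (n : ℝ) - (c : ℝ) ≤ (complexity U (firstBits α n) : ℝ)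

/-- `α` is `T`-compressible: `limsup H(α_n)/n ≤ T`. -/
def TCompressible (U : List Bool →. List Bool) (T α : ℝ) : Prop :=
  Filter.limsup (fun n : ℕ => (complexity U (firstBits α n) : ℝ) / (n : ℝ)) atTop ≤ T

/-- The partition function `Z(T) = ∑_{p ∈ dom U} 2^{-|p|/T}`. -/
noncomputable def Zfun (U : List Bool →. List Bool) (T : ℝ) : ℝ :=
  ∑' p : {p : List Bool // (U p).Dom}, (2 : ℝ) ^ (-((p : List Bool).length : ℝ) / T)

/-- The free energy `F(T) = -T log₂ Z(T)`. -/
noncomputable def Ffun (U : List Bool →. List Bool) (T : ℝ) : ℝ :=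
  -T * Real.logb 2 (Zfun U T)

/-- raw code of a rational -/
def ratCode (q : ℚ) : ℕ := Nat.pair (Equiv.intEquivNat q.num) q.den

def goodCode (m : ℕ) : Prop :=
  0 < m.unpair.2 ∧ ∀ x < m.unpair.1 + m.unpair.2 + 1,
    ¬ (((m.unpair.1 + 1) / 2) % x = 0 ∧ m.unpair.2 % x = 0) ∨ x = 1

instance : DecidablePred goodCode := fun m => by unfold goodCode; infer_instance

theorem natAbs_intEquivNat (z : ℤ) : (Equiv.intEquivNat z + 1) / 2 = z.natAbs := by
  cases z with
  | ofNat a => change (2 * a + 1) / 2 = a; omega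
  | negSucc a => change (2 * a + 1 + 1) / 2 = a + 1; omega

theorem toNat_intEquivNat (z : ℤ) :
    (if Equiv.intEquivNat z % 2 = 0 then Equiv.intEquivNat z / 2 else 0) = z.toNat := by
  cases z with
  | ofNat a =>
    change (if (2 * a) % 2 = 0 then (2 * a) / 2 else 0) = a
    rw [if_pos (by omega)]; omega
  | negSucc a =>
    change (if (2 * a + 1) % 2 = 0 then (2 * a + 1) / 2 else 0) = 0
    rw [if_neg (by omega)]

theorem goodCode_iff (m : ℕ) : goodCode m ↔ ∃ q, ratCode q = m := by
  unfold goodCode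
  constructor
  · rintro ⟨hd, hx⟩
    obtain ⟨z, hz⟩ := Equiv.intEquivNat.surjective m.unpair.1
    have hc : z.natAbs.Coprime m.unpair.2 := by
      have h1 := natAbs_intEquivNat z
      rw [hz] at h1
      rw [h1] at hx
      have h2 := hx (Nat.gcd z.natAbs m.unpair.2)
        (by have := Nat.gcd_le_right z.natAbs hd; omega)
      rcases h2 with h2 | h2
      · exact absurd ⟨Nat.mod_eq_zero_of_dvd (Nat.gcd_dvd_left _ _),
          Nat.mod_eq_zero_of_dvd (Nat.gcd_dvd_right _ _)⟩ h2
      · exact h2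
    refine ⟨⟨z, m.unpair.2, hd.ne', hc⟩, ?_⟩
    simp [ratCode, hz]
  · rintro ⟨q, rfl⟩
    simp only [ratCode, Nat.unpair_pair, natAbs_intEquivNat]
    refine ⟨q.pos, fun x _ => ?_⟩
    by_cases h : q.num.natAbs % x = 0 ∧ q.den % x = 0
    · right
      have := Nat.dvd_gcd (Nat.dvd_of_mod_eq_zero h.1) (Nat.dvd_of_mod_eq_zero h.2)
      rw [q.reduced] at this
      exact Nat.dvd_one.1 this
    · left; exact h

theorem primrec_goodCode : PrimrecPred goodCode := by
  have u1 : Primrec fun m : ℕ => m.unpair.1 := Primrec.fst.comp Primrec.unpair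
  have u2 : Primrec fun m : ℕ => m.unpair.2 := Primrec.snd.comp Primrec.unpair
  have a1 : Primrec fun m : ℕ => (m.unpair.1 + 1) / 2 :=
    Primrec.nat_div.comp (Primrec.succ.comp u1) (Primrec.const 2)
  have hR : PrimrecRel fun (x m : ℕ) =>
      ¬ (((m.unpair.1 + 1) / 2) % x = 0 ∧ m.unpair.2 % x = 0) ∨ x = 1 := by
    refine PrimrecPred.or (PrimrecPred.not (PrimrecPred.and ?_ ?_)) ?_
    · exact Primrec.eq.comp (Primrec.nat_mod.comp (a1.comp Primrec.snd) Primrec.fst) (Primrec.const 0)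
    · exact Primrec.eq.comp (Primrec.nat_mod.comp (u2.comp Primrec.snd) Primrec.fst) (Primrec.const 0)
    · exact Primrec.eq.comp Primrec.fst (Primrec.const 1)
  refine PrimrecPred.and (Primrec.nat_lt.comp (Primrec.const 0) u2) ?_
  exact hR.forall_lt.comp (Primrec.succ.comp (Primrec.nat_add.comp u1 u2)) Primrec.id

def ratEnc (q : ℚ) : ℕ := @Encodable.encode ℚ (Primcodable.ofDenumerable ℚ).toEncodable q

theorem primrec_ratEnc : Primrec ratEnc := Primrec.encode

theorem encode_rat (q : ℚ) :
    ratEnc q = ((List.range (ratCode q)).filter (fun m => goodCode m)).length := by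
  have h : ratEnc q =
      letI := @Encodable.decidableRangeEncode ℚ Rat.instEncodable
      (List.range (@Encodable.encode ℚ Rat.instEncodable q)).countP
        (· ∈ Set.range (@Encodable.encode ℚ Rat.instEncodable)) := rfl
  have h2 : ∀ q, @Encodable.encode ℚ Rat.instEncodable q = ratCode q := fun _ => rfl
  rw [h]
  simp only [h2]
  rw [List.countP_eq_length_filter]
  congr 1
  apply List.filter_congr
  intro m _
  rw [decide_eq_decide, goodCode_iff]
  simp [Set.mem_range, h2]

theorem ratCode_inj : Function.Injective ratCode := by
  intro q r h
  unfold ratCode at h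
  rw [Nat.pair_eq_pair] at h
  exact Rat.ext (Equiv.intEquivNat.injective h.1) h.2

theorem goodcount_strict {a b : ℕ} (ha : goodCode a) (hab : a < b) :
    ((List.range a).filter (fun m => goodCode m)).length
      < ((List.range b).filter (fun m => goodCode m)).length := by
  obtain ⟨c, rfl⟩ := Nat.exists_eq_add_of_lt hab
  have : a + c + 1 = (a + 1) + c := by omega
  rw [this, List.range_add, List.filter_append, List.range_succ, List.filter_append]
  simp [ha]

theorem computable_ratCode : Computable ratCode := by
  have hc : Primrec fun k : ℕ => ((List.range k).filter (fun m => goodCode m)).length :=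
    Primrec.list_length.comp ((Primrec.listFilter primrec_goodCode).comp Primrec.list_range)
  have hex : ∀ q : ℚ, ∃ m, goodCode m ∧
      ((List.range m).filter (fun m => goodCode m)).length = ratEnc q := by
    intro q
    exact ⟨ratCode q, (goodCode_iff _).2 ⟨q, rfl⟩, (encode_rat q).symm⟩
  have hp : PrimrecPred fun p : ℚ × ℕ => goodCode p.2 ∧
      ((List.range p.2).filter (fun m => goodCode m)).length = ratEnc p.1 :=
    PrimrecPred.and (primrec_goodCode.comp Primrec.snd)
      (Primrec.eq.comp (hc.comp Primrec.snd) (primrec_ratEnc.comp Primrec.fst))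
  have := Computable.find (P := fun (q : ℚ) (m : ℕ) => goodCode m ∧
      ((List.range m).filter (fun m => goodCode m)).length = ratEnc q)
    hp.computablePred hex
  refine this.of_eq fun q => ?_
  have hs := Nat.find_spec (hex q)
  have hs2 := hs.2.trans (encode_rat q)
  have hq : goodCode (ratCode q) := (goodCode_iff _).2 ⟨q, rfl⟩
  rcases lt_trichotomy (Nat.find (hex q)) (ratCode q) with h | h | h
  · exact absurd hs2 (goodcount_strict hs.1 h).ne
  · exact h
  · exact absurd hs2 (goodcount_strict hq h).ne'

theorem computable_toNat : Computable fun q : ℚ => q.num.toNat := by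
  have u1 : Primrec fun m : ℕ => m.unpair.1 := Primrec.fst.comp Primrec.unpair
  have h : Primrec fun m : ℕ => if m.unpair.1 % 2 = 0 then m.unpair.1 / 2 else 0 :=
    Primrec.ite (Primrec.eq.comp (Primrec.nat_mod.comp u1 (Primrec.const 2)) (Primrec.const 0))
      (Primrec.nat_div.comp u1 (Primrec.const 2)) (Primrec.const 0)
  refine (h.to_comp.comp computable_ratCode).of_eq fun q => ?_
  simp only [ratCode, Nat.unpair_pair, toNat_intEquivNat]

theorem computable_den : Computable fun q : ℚ => q.den := by
  have u2 : Primrec fun m : ℕ => m.unpair.2 := Primrec.snd.comp Primrec.unpair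
  refine (u2.to_comp.comp computable_ratCode).of_eq fun q => ?_
  simp [ratCode]

theorem computable_succPNat : Computable Nat.succPNat := by
  have := Computable.ofNat ℕ+
  refine this.of_eq fun n => ?_
  rfl

theorem approx_exists {α : ℝ} (h : ComputableReal α) (hα : 0 < α) :
    ∃ L R D : ℕ → ℕ, Computable L ∧ Computable R ∧ Computable D ∧ (∀ n, 0 < D n) ∧
      (∀ n, (L n : ℝ) / D n ≤ α) ∧ (∀ n, α ≤ (R n : ℝ) / D n) ∧
      Tendsto (fun n => (L n : ℝ) / D n) atTop (nhds α) ∧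
      Tendsto (fun n => (R n : ℝ) / D n) atTop (nhds α) := by
  obtain ⟨f, hf, hb⟩ := h
  have hq : Computable fun n : ℕ => f n.succPNat := hf.comp computable_succPNat
  have ha : Computable fun n : ℕ => (f n.succPNat).num.toNat := computable_toNat.comp hq
  have hd : Computable fun n : ℕ => (f n.succPNat).den := computable_den.comp hq
  have hN : Computable fun n : ℕ => n + 1 := Computable.succ
  have hm : Computable fun n : ℕ => (f n.succPNat).num.toNat * (n + 1) :=
    Primrec.nat_mul.to_comp.comp ha hN
  have key : ∀ n : ℕ, |α - ((f n.succPNat).num.toNat : ℝ) / (f n.succPNat).den|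
      ≤ 1 / ((n : ℝ) + 1) := by
    intro n
    have h1 := hb n.succPNat
    have hcast : (((n.succPNat : ℕ+) : ℕ) : ℝ) = (n : ℝ) + 1 := by simp
    rw [hcast] at h1
    set q := f n.succPNat
    have hdp : (0 : ℝ) < q.den := by exact_mod_cast q.pos
    have hqq : (q : ℝ) = (q.num : ℝ) / q.den := Rat.cast_def q
    rcases le_or_gt 0 q.num with h0 | h0
    · have : ((q.num.toNat : ℕ) : ℝ) = (q.num : ℝ) := by
        exact_mod_cast congrArg (Int.cast : ℤ → ℝ) (Int.toNat_of_nonneg h0)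
      rw [this, ← hqq]
      exact h1.le
    · have : q.num.toNat = 0 := Int.toNat_of_nonpos h0.le
      rw [this]
      have hq0 : (q : ℝ) < 0 := by
        rw [hqq]; exact div_neg_of_neg_of_pos (by exact_mod_cast h0) hdp
      rw [abs_lt] at h1
      simp only [Nat.cast_zero, zero_div, sub_zero]
      rw [abs_of_pos hα]
      linarith [h1.2]
  have hlim : Tendsto (fun n : ℕ => 1 / ((n : ℝ) + 1)) atTop (nhds 0) :=
    tendsto_one_div_add_atTop_nhds_zero_nat
  have hLval : ∀ n : ℕ, (((f n.succPNat).num.toNat * (n + 1) - (f n.succPNat).den : ℕ) : ℝ)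
      / (((f n.succPNat).den * (n + 1) : ℕ) : ℝ)
      = max (((f n.succPNat).num.toNat : ℝ) / (f n.succPNat).den - 1 / ((n : ℝ) + 1)) 0 := by
    intro n
    set q := f n.succPNat
    have hdp : (0 : ℝ) < q.den := by exact_mod_cast q.pos
    have hn : (0 : ℝ) < (n : ℝ) + 1 := by positivity
    have e : (q.num.toNat : ℝ) / q.den - 1 / ((n : ℝ) + 1)
        = ((q.num.toNat : ℝ) * (n + 1) - q.den) / (q.den * (n + 1)) := by
      field_simp
    rw [e]
    rcases le_total q.den (q.num.toNat * (n + 1)) with h | h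
    · rw [Nat.cast_sub h, max_eq_left]
      · push_cast; rfl
      · apply div_nonneg _ (by positivity)
        have : (q.den : ℝ) ≤ (q.num.toNat : ℝ) * (n + 1) := by exact_mod_cast h
        linarith
    · rw [Nat.sub_eq_zero_of_le h, max_eq_right]
      · simp
      · apply div_nonpos_of_nonpos_of_nonneg _ (by positivity)
        have : (q.num.toNat : ℝ) * (n + 1) ≤ (q.den : ℝ) := by exact_mod_cast h
        linarith
  have hRval : ∀ n : ℕ, (((f n.succPNat).num.toNat * (n + 1) + (f n.succPNat).den : ℕ) : ℝ)
      / (((f n.succPNat).den * (n + 1) : ℕ) : ℝ)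
      = ((f n.succPNat).num.toNat : ℝ) / (f n.succPNat).den + 1 / ((n : ℝ) + 1) := by
    intro n
    set q := f n.succPNat
    have hdp : (0 : ℝ) < q.den := by exact_mod_cast q.pos
    have hn : (0 : ℝ) < (n : ℝ) + 1 := by positivity
    push_cast
    field_simp
  refine ⟨fun n => (f n.succPNat).num.toNat * (n + 1) - (f n.succPNat).den,
    fun n => (f n.succPNat).num.toNat * (n + 1) + (f n.succPNat).den,
    fun n => (f n.succPNat).den * (n + 1),
    Primrec.nat_sub.to_comp.comp hm hd, Primrec.nat_add.to_comp.comp hm hd,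
    Primrec.nat_mul.to_comp.comp hd hN, fun n => Nat.mul_pos (Rat.pos _) (Nat.succ_pos n),
    ?_, ?_, ?_, ?_⟩
  · intro n
    rw [hLval]
    have := abs_le.1 (key n)
    exact max_le (by linarith [this.1]) hα.le
  · intro n
    rw [hRval]
    have := abs_le.1 (key n)
    linarith [this.2]
  · have hl : Tendsto (fun n : ℕ => α - 2 * (1 / ((n : ℝ) + 1))) atTop (nhds α) := by
      simpa using (hlim.const_mul 2).const_sub α
    refine tendsto_of_tendsto_of_tendsto_of_le_of_le hl tendsto_const_nhds ?_ ?_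
    · intro n
      simp only [hLval]
      refine le_trans ?_ (le_max_left _ _)
      have := abs_le.1 (key n)
      linarith [this.2]
    · intro n
      simp only [hLval]
      have := abs_le.1 (key n)
      exact max_le (by linarith [this.1]) hα.le
  · have hl : Tendsto (fun n : ℕ => α + 2 * (1 / ((n : ℝ) + 1))) atTop (nhds α) := by
      simpa using (hlim.const_mul 2).const_add α
    refine tendsto_of_tendsto_of_tendsto_of_le_of_le tendsto_const_nhds hl ?_ ?_
    · intro n
      simp only [hRval]
      have := abs_le.1 (key n)
      linarith [this.2]
    · intro n
      simp only [hRval]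
      have := abs_le.1 (key n)
      linarith [this.1]

theorem primrec_sum {α : Type*} [Primcodable α] {f : α → ℕ → ℕ} {g : α → ℕ}
    (hf : Primrec₂ f) (hg : Primrec g) :
    Primrec fun a => ∑ i ∈ Finset.range (g a), f a i := by
  have h : Primrec fun a => Nat.rec (motive := fun _ => ℕ) 0 (fun n ih => ih + f a n) (g a) := by
    refine Primrec.nat_rec' (h := fun a x => x.2 + f a x.1) hg (Primrec.const 0) ?_
    exact Primrec.nat_add.comp (Primrec.snd.comp Primrec.snd)
      (hf.comp Primrec.fst (Primrec.fst.comp Primrec.snd))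
  refine h.of_eq fun a => ?_
  induction g a with
  | zero => simp
  | succ n ih => rw [Finset.sum_range_succ, ← ih]

theorem primrec_pow : Primrec₂ ((· ^ ·) : ℕ → ℕ → ℕ) :=
  Primrec₂.unpaired'.1 Nat.Primrec.pow

theorem halting_stage {U : List Bool →. List Bool} (hU : Partrec U) :
    ∃ H : ℕ → ℕ → Bool, Primrec₂ H ∧ (∀ k l i, k ≤ l → H k i = true → H l i = true) ∧
      ∀ p, (U p).Dom ↔ ∃ k, H k (Encodable.encode p) = true := by
  obtain ⟨c, hc⟩ := Nat.Partrec.Code.exists_code.1 hU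
  refine ⟨fun k i => (Nat.Partrec.Code.evaln k c i).isSome, ?_, ?_, ?_⟩
  · refine Primrec.option_isSome.comp (Nat.Partrec.Code.primrec_evaln.comp
      (Primrec.pair (Primrec.pair Primrec.fst (Primrec.const c)) Primrec.snd))
  · intro k l i hkl h
    obtain ⟨x, hx⟩ := Option.isSome_iff_exists.1 h
    exact Option.isSome_iff_exists.2 ⟨x, Nat.Partrec.Code.evaln_mono hkl hx⟩
  · intro p
    have h1 : c.eval (Encodable.encode p) = (U p).map Encodable.encode := by
      rw [hc]; simp
    have h2 : (U p).Dom ↔ (c.eval (Encodable.encode p)).Dom := by rw [h1]; rfl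
    rw [h2, Part.dom_iff_mem]
    constructor
    · rintro ⟨y, hy⟩
      obtain ⟨k, hk⟩ := Nat.Partrec.Code.evaln_complete.1 hy
      exact ⟨k, Option.isSome_iff_exists.2 ⟨y, hk⟩⟩
    · rintro ⟨k, hk⟩
      obtain ⟨y, hy⟩ := Option.isSome_iff_exists.1 hk
      exact ⟨y, Nat.Partrec.Code.evaln_complete.2 ⟨k, hy⟩⟩

def stageTerm (H : ℕ → ℕ → Bool) (a : List Bool × ℕ × ℕ × ℕ) (i : ℕ) : ℕ :=
  Option.casesOn (motive := fun _ => ℕ) (Encodable.decode₂ (List Bool) i) 0 (fun q =>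
    if q = a.1 ∨ H a.2.2.2 i = true then
      a.2.1 ^ q.length * a.2.2.1 ^ (a.2.2.2 - q.length) else 0)

def stageSum (H : ℕ → ℕ → Bool) (a : List Bool × ℕ × ℕ × ℕ) : ℕ :=
  ∑ i ∈ Finset.range a.2.2.2, stageTerm H a i

theorem primrec_stageSum {H : ℕ → ℕ → Bool} (hH : Primrec₂ H) : Primrec (stageSum H) := by
  have hk : Primrec fun a : List Bool × ℕ × ℕ × ℕ => a.2.2.2 :=
    Primrec.snd.comp (Primrec.snd.comp Primrec.snd)
  have hu : Primrec fun a : List Bool × ℕ × ℕ × ℕ => a.2.1 :=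
    Primrec.fst.comp Primrec.snd
  have hv : Primrec fun a : List Bool × ℕ × ℕ × ℕ => a.2.2.1 :=
    Primrec.fst.comp (Primrec.snd.comp Primrec.snd)
  refine primrec_sum ?_ hk
  refine Primrec.option_casesOn (Primrec.decode₂.comp Primrec.snd) (Primrec.const 0) ?_
  have ha : Primrec fun b : ((List Bool × ℕ × ℕ × ℕ) × ℕ) × List Bool => b.1.1 :=
    Primrec.fst.comp Primrec.fst
  have hl : Primrec fun b : ((List Bool × ℕ × ℕ × ℕ) × ℕ) × List Bool => b.2.length :=
    Primrec.list_length.comp Primrec.snd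
  refine Primrec.ite (PrimrecPred.or ?_ ?_) ?_ (Primrec.const 0)
  · exact Primrec.eq.comp Primrec.snd (Primrec.fst.comp ha)
  · exact Primrec.eq.comp (hH.comp (hk.comp ha) (Primrec.snd.comp Primrec.fst))
      (Primrec.const true)
  · exact Primrec.nat_mul.comp (primrec_pow.comp (hu.comp ha) hl)
      (primrec_pow.comp (hv.comp ha) (Primrec.nat_sub.comp (hk.comp ha) hl))

theorem re_exists {α : Type*} [Primcodable α] {g : α → ℕ → Bool} (hg : Computable₂ g) :
    REPred fun a => ∃ w, g a w = true := by
  have h : Partrec fun a => Nat.rfind (fun w => (Part.some (g a w) : Part Bool)) :=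
    Partrec.rfind hg.partrec₂
  refine h.dom_re.of_eq fun a => ?_
  refine (Nat.rfind_dom' (p := fun w => (Part.some (g a w) : Part Bool))).trans ?_
  constructor
  · rintro ⟨n, hn, _⟩
    exact ⟨n, (Part.mem_some_iff.1 hn).symm⟩
  · rintro ⟨n, hn⟩
    exact ⟨n, Part.mem_some_iff.2 hn.symm, fun _ => trivial⟩

noncomputable def stageBall (k : ℕ) : Finset (List Bool) :=
  (Finset.range k).preimage Encodable.encode (Encodable.encode_injective.injOn)

theorem mem_stageBall {k : ℕ} {q : List Bool} : q ∈ stageBall k ↔ Encodable.encode q < k := by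
  simp [stageBall]

theorem stageSum_eq (H : ℕ → ℕ → Bool) (p : List Bool) (u v k : ℕ) (hv : 0 < v) :
    (stageSum H (p, u, v, k) : ℝ) / (v : ℝ) ^ k =
      ∑ q ∈ (stageBall k).filter (fun q => q = p ∨ H k (Encodable.encode q) = true),
        ((u : ℝ) / v) ^ q.length := by
  have hv' : (v : ℝ) ≠ 0 := by positivity
  have h1 : stageSum H (p, u, v, k)
      = ∑ q ∈ stageBall k, stageTerm H (p, u, v, k) (Encodable.encode q) := by
    unfold stageSum stageBall
    rw [Finset.sum_preimage]
    intro i _ hi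
    have : Encodable.decode₂ (List Bool) i = none := by
      rw [Option.eq_none_iff_forall_not_mem]
      intro q hq
      exact hi ⟨q, Encodable.mem_decode₂.1 hq⟩
    simp [stageTerm, this]
  rw [h1, Finset.sum_filter, Nat.cast_sum, Finset.sum_div]
  refine Finset.sum_congr rfl fun q hq => ?_
  rw [mem_stageBall] at hq
  have hlen : q.length ≤ k := (Encodable.length_le_encode q).trans hq.le
  simp only [stageTerm, Encodable.encodek₂]
  split_ifs
  · push_cast
    rw [div_pow, div_eq_div_iff (by positivity) (by positivity)]
    rw [mul_assoc, ← pow_add, Nat.sub_add_cancel hlen]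
  · simp

def witnessCond (H : ℕ → ℕ → Bool) (L R D Lf Df : ℕ → ℕ) (p : List Bool) (n u v k : ℕ) : Prop :=
  u ≤ v ∧ 0 < v ∧ u ^ Lf n * D n ^ Df n < v ^ Lf n * L n ^ Df n ∧
    R n * v ^ k < D n * stageSum H (p, u, v, k)

theorem pow_cond_iff {u v L D : ℕ} (a : ℕ) {b : ℕ} (hv : 0 < v) (hD : 0 < D) (hb : 0 < b) :
    u ^ a * D ^ b < v ^ a * L ^ b ↔
      ((u : ℝ) / v) ^ ((a : ℝ) / b) < (L : ℝ) / D := by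
  have hv' : (0 : ℝ) < v := by exact_mod_cast hv
  have hD' : (0 : ℝ) < D := by exact_mod_cast hD
  have hb' : (0 : ℝ) < b := by exact_mod_cast hb
  have hr : (0 : ℝ) ≤ (u : ℝ) / v := by positivity
  have h1 : ((u : ℝ) / v) ^ ((a : ℝ) / b) < (L : ℝ) / D ↔
      (((u : ℝ) / v) ^ ((a : ℝ) / b)) ^ b < ((L : ℝ) / D) ^ b :=
    (pow_lt_pow_iff_left₀ (Real.rpow_nonneg hr _) (by positivity) hb.ne').symm
  have h2 : (((u : ℝ) / v) ^ ((a : ℝ) / b)) ^ b = ((u : ℝ) / v) ^ a := by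
    rw [← Real.rpow_natCast, ← Real.rpow_mul hr, div_mul_cancel₀ _ hb'.ne', Real.rpow_natCast]
  rw [h1, h2, div_pow, div_pow, div_lt_div_iff₀ (by positivity) (by positivity)]
  rw [mul_comm ((L : ℝ) ^ b)]
  exact_mod_cast Iff.rfl

theorem sum_cond_iff {R D v k S : ℕ} (hv : 0 < v) (hD : 0 < D) :
    R * v ^ k < D * S ↔ (R : ℝ) / D < (S : ℝ) / (v : ℝ) ^ k := by
  have hv' : (0 : ℝ) < v := by exact_mod_cast hv
  have hD' : (0 : ℝ) < D := by exact_mod_cast hD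
  rw [div_lt_div_iff₀ (by positivity) (by positivity), mul_comm (S : ℝ)]
  exact_mod_cast Iff.rfl

theorem nondom_iff {U : List Bool →. List Bool} {H : ℕ → ℕ → Bool}
    (hmono : ∀ k l i, k ≤ l → H k i = true → H l i = true)
    (hdom : ∀ p, (U p).Dom ↔ ∃ k, H k (Encodable.encode p) = true)
    {x Z F : ℝ} (hx0 : 0 < x) (hx1 : x < 1) (hF : 0 < F) (hZ : Z = x ^ F)
    (hs : HasSum (fun p : {p : List Bool // (U p).Dom} => x ^ (p : List Bool).length) Z)
    {L R D Lf Df : ℕ → ℕ} (hD : ∀ n, 0 < D n) (hL : ∀ n, (L n : ℝ) / D n ≤ Z)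
    (hR : ∀ n, Z ≤ (R n : ℝ) / D n) (hDf : ∀ n, 0 < Df n) (hLf : ∀ n, (Lf n : ℝ) / Df n ≤ F)
    (tL : Tendsto (fun n => (L n : ℝ) / D n) atTop (nhds Z))
    (tR : Tendsto (fun n => (R n : ℝ) / D n) atTop (nhds Z))
    (tF : Tendsto (fun n => (Lf n : ℝ) / Df n) atTop (nhds F)) (p : List Bool) :
    ¬ (U p).Dom ↔ ∃ n u v k, witnessCond H L R D Lf Df p n u v k := by
  classical
  constructor
  · intro hp
    have hxp : 0 < x ^ p.length := by positivity
    obtain ⟨s, hsum⟩ := (hs.eventually (lt_mem_nhds (show Z - x ^ p.length < Z by linarith))).exists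
    set s' : Finset (List Bool) := s.map (Function.Embedding.subtype _) with hs'
    have hs'dom : ∀ q ∈ s', (U q).Dom := by
      intro q hq
      rw [hs', Finset.mem_map] at hq
      obtain ⟨⟨a, ha⟩, _, rfl⟩ := hq
      exact ha
    have hps : p ∉ s' := fun h => hp (hs'dom p h)
    have hsum' : Z < ∑ q ∈ insert p s', x ^ q.length := by
      rw [Finset.sum_insert hps, hs', Finset.sum_map]
      simp only [Function.Embedding.subtype_apply]
      linarith
    have hcont : Continuous fun r : ℝ => ∑ q ∈ insert p s', r ^ q.length := by fun_prop
    have hev : ∀ᶠ r in nhdsWithin x (Set.Iio x), Z < ∑ q ∈ insert p s', r ^ q.length :=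
      (hcont.continuousAt.eventually (lt_mem_nhds hsum')).filter_mono nhdsWithin_le_nhds
    obtain ⟨l, hl, hsub⟩ := (mem_nhdsLT_iff_exists_Ioo_subset).1 hev
    obtain ⟨r, hr1, hr2⟩ := exists_rat_btwn (max_lt hl hx0 : max l 0 < x)
    have hr0 : (0 : ℝ) < r := (le_max_right _ _).trans_lt hr1
    have hrsum : Z < ∑ q ∈ insert p s', (r : ℝ) ^ q.length :=
      hsub ⟨(le_max_left _ _).trans_lt hr1, hr2⟩
    have hx1' : ∃ u v : ℕ, 0 < v ∧ (u : ℝ) / v = r := by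
      have hr0' : 0 < r := by exact_mod_cast hr0
      refine ⟨r.num.toNat, r.den, r.pos, ?_⟩
      have h0 : 0 ≤ r.num := (Rat.num_pos.2 hr0').le
      have : ((r.num.toNat : ℕ) : ℝ) = (r.num : ℝ) := by
        exact_mod_cast congrArg (Int.cast : ℤ → ℝ) (Int.toNat_of_nonneg h0)
      rw [this, Rat.cast_def r]
    obtain ⟨u, v, hv, huv⟩ := hx1'
    have hk : ∀ᶠ k in atTop, ∀ q ∈ insert p s', Encodable.encode q < k ∧
        (q = p ∨ H k (Encodable.encode q) = true) := by
      rw [Filter.eventually_all_finset]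
      intro q hq
      refine (eventually_gt_atTop _).and ?_
      rw [Finset.mem_insert] at hq
      rcases hq with hq | hq
      · exact Eventually.of_forall fun _ => Or.inl hq
      · obtain ⟨k0, hk0⟩ := (hdom q).1 (hs'dom q hq)
        filter_upwards [eventually_ge_atTop k0] with k hk
        exact Or.inr (hmono _ _ _ hk hk0)
    obtain ⟨k, hk⟩ := hk.exists
    have hrF : (r : ℝ) ^ F < Z := by
      rw [hZ]; exact Real.rpow_lt_rpow hr0.le hr2 hF
    have t1 : Tendsto (fun n => (r : ℝ) ^ ((Lf n : ℝ) / Df n)) atTop (nhds ((r : ℝ) ^ F)) :=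
      ((Real.continuous_const_rpow hr0.ne').tendsto F).comp tF
    have e1 := t1.eventually_lt tL hrF
    have e2 := tR.eventually (gt_mem_nhds hrsum)
    obtain ⟨n, hn1, hn2⟩ := (e1.and e2).exists
    have hule : u ≤ v := by
      have hv' : (0 : ℝ) < v := by exact_mod_cast hv
      have h3 : (u : ℝ) / v ≤ 1 := by rw [huv]; exact (hr2.trans hx1).le
      rw [div_le_one hv'] at h3
      exact_mod_cast h3
    refine ⟨n, u, v, k, hule, hv, ?_, ?_⟩
    · rw [pow_cond_iff _ hv (hD n) (hDf n), huv]
      exact hn1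
    · rw [sum_cond_iff hv (hD n), stageSum_eq _ _ _ _ _ hv, huv]
      refine hn2.trans_le ?_
      apply Finset.sum_le_sum_of_subset_of_nonneg
      · intro q hq
        rw [Finset.mem_filter, mem_stageBall]
        exact hk q hq
      · intros; positivity
  · rintro ⟨n, u, v, k, huv, hv, h1, h2⟩ hp
    rw [pow_cond_iff _ hv (hD n) (hDf n)] at h1
    rw [sum_cond_iff hv (hD n), stageSum_eq _ _ _ _ _ hv] at h2
    have hv' : (0 : ℝ) < v := by exact_mod_cast hv
    set r : ℝ := (u : ℝ) / v with hr
    have hr0 : 0 ≤ r := by positivity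
    have hr1 : r ≤ 1 := by
      rw [hr, div_le_one hv']; exact_mod_cast huv
    have hrx : r ≤ x := by
      rcases hr0.eq_or_lt with h | h
      · rw [← h]; exact hx0.le
      · have h3 : r ^ F ≤ x ^ F := by
          rw [← hZ]
          exact ((Real.rpow_le_rpow_of_exponent_ge h hr1 (hLf n)).trans h1.le).trans (hL n)
        exact (Real.rpow_le_rpow_iff hr0 hx0.le hF).1 h3
    have hbound : ∑ q ∈ (stageBall k).filter
        (fun q => q = p ∨ H k (Encodable.encode q) = true), r ^ q.length ≤ Z := by
      have hd : ∀ q ∈ (stageBall k).filter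
          (fun q => q = p ∨ H k (Encodable.encode q) = true), (U q).Dom := by
        intro q hq
        rcases (Finset.mem_filter.1 hq).2 with h | h
        · rw [h]; exact hp
        · exact (hdom q).2 ⟨k, h⟩
      calc _ ≤ ∑ q ∈ (stageBall k).filter
            (fun q => q = p ∨ H k (Encodable.encode q) = true), x ^ q.length :=
            Finset.sum_le_sum fun q _ => pow_le_pow_left₀ hr0 hrx _
        _ = ∑ q ∈ ((stageBall k).filter
            (fun q => q = p ∨ H k (Encodable.encode q) = true)).subtype (fun q => (U q).Dom),
              x ^ (q : List Bool).length :=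
            (Finset.sum_subtype_of_mem (fun q : List Bool => x ^ q.length) hd).symm
        _ ≤ Z := sum_le_hasSum _ (fun q _ => by positivity) hs
    linarith [hR n]

def lenBound : ℕ → ℕ
  | 0 => 0
  | n + 1 => Nat.succ (Nat.pair 1 (lenBound n))

theorem primrec_lenBound : Primrec lenBound := by
  have h : Primrec fun n : ℕ =>
      Nat.rec (motive := fun _ => ℕ) 0 (fun _ ih => Nat.succ (Nat.pair 1 ih)) n := by
    refine Primrec.nat_rec₁ (f := fun _ ih => Nat.succ (Nat.pair 1 ih)) 0 ?_
    exact Primrec.succ.comp (Primrec₂.natPair.comp (Primrec.const 1) Primrec.snd)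
  refine h.of_eq fun n => ?_
  induction n with
  | zero => rfl
  | succ n ih => simp only [lenBound, ← ih]

theorem lenBound_mono : Monotone lenBound := by
  refine monotone_nat_of_le_succ fun n => ?_
  exact (Nat.right_le_pair 1 _).trans (Nat.le_succ _)

theorem pair_mono {a b c d : ℕ} (h1 : a ≤ b) (h2 : c ≤ d) : Nat.pair a c ≤ Nat.pair b d := by
  rcases h1.eq_or_lt with rfl | h1
  · rcases h2.eq_or_lt with rfl | h2
    · exact le_rfl
    · exact (Nat.pair_lt_pair_right _ h2).le
  · rcases h2.eq_or_lt with rfl | h2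
    · exact (Nat.pair_lt_pair_left _ h1).le
    · exact ((Nat.pair_lt_pair_left _ h1).trans (Nat.pair_lt_pair_right _ h2)).le

theorem encode_le_lenBound (p : List Bool) : Encodable.encode p ≤ lenBound p.length := by
  induction p with
  | nil => simp [lenBound]
  | cons b l ih =>
    rw [Encodable.encode_list_cons, List.length_cons, lenBound]
    refine Nat.succ_le_succ (pair_mono ?_ ih)
    cases b <;> decide

def unary (k : ℕ) : List Bool := (List.range k).map (fun _ => true)

theorem primrec_unary : Primrec unary :=
  Primrec.list_map Primrec.list_range (Primrec₂.const true)

theorem length_unary (k : ℕ) : (unary k).length = k := by simp [unary]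

def tally (k : ℕ) : List Bool := unary k ++ [false]

theorem primrec_tally : Primrec tally :=
  Primrec.list_append.comp primrec_unary (Primrec.const [false])

theorem length_tally (k : ℕ) : (tally k).length = k + 1 := by simp [tally, unary]

theorem tally_prefix {a b : ℕ} (h : tally a <+: tally b) : a = b := by
  by_contra hne
  have hle := h.length_le
  rw [length_tally, length_tally] at hle
  have hlt : a < b := by omega
  have h1 : (tally a)[a]? = some false := by
    simp [tally, unary]
  have h2 : (tally b)[a]? = some true := by
    simp [tally, unary, List.getElem?_append, hlt]
  obtain ⟨t, ht⟩ := h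
  rw [← ht, List.getElem?_append_left (by rw [length_tally]; omega), h1] at h2
  simp at h2

theorem tally_machine {U : List Bool →. List Bool} (hU : OptimalMachine U) {s : ℕ → List Bool}
    (hs : Computable s) :
    ∃ d, ∀ k, ∃ p', s k ∈ U p' ∧ p'.length ≤ k + 1 + d := by
  let C : List Bool →. List Bool := fun p =>
    ((bif decide (p = tally (p.length - 1)) then some (s (p.length - 1)) else none :
      Option (List Bool)) : Part (List Bool))
  have hlen : Primrec fun p : List Bool => p.length - 1 :=
    Primrec.pred.comp Primrec.list_length
  have hC : Partrec C := by
    refine Computable.ofOption (Computable.cond ?_ ?_ (Computable.const none))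
    · exact (Primrec.eq.comp Primrec.id (primrec_tally.comp hlen)).decide.to_comp
    · exact Computable.option_some.comp (hs.comp hlen.to_comp)
  have hdom : ∀ p, (C p).Dom → p = tally (p.length - 1) := by
    intro p hp
    by_contra h
    simp [C, h] at hp
  obtain ⟨d, hd⟩ := hU.2.2 C hC (by
    intro p q hp hq hpq
    have h1 := hdom p hp
    have h2 := hdom q hq
    rw [h1, h2] at hpq
    rw [h1, h2, tally_prefix hpq])
  refine ⟨d, fun k => ?_⟩
  obtain ⟨p', h1, h2⟩ := hd (tally k) (s k) (by simp [C, length_tally])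
  rw [length_tally] at h2
  exact ⟨p', h1, h2⟩

theorem dom_not_decidable {U : List Bool →. List Bool} (hU : OptimalMachine U) :
    ¬ ComputablePred fun p => (U p).Dom := by
  classical
  intro hdec
  obtain ⟨f, hf, hfe⟩ := ComputablePred.computable_iff.1 hdec
  have hfe' : ∀ p, (U p).Dom ↔ f p = true := fun p => by
    have := congrFun hfe p
    exact this ▸ Iff.rfl
  let g : List Bool → ℕ := fun p => if h : (U p).Dom then ((U p).get h).length else 0
  have hg : Computable g := by
    have h : Partrec fun p => bif f p then (U p).map List.length else Part.some 0 :=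
      Partrec.cond hf (hU.1.map (Computable.list_length.comp Computable.snd).to₂)
        (Computable.const 0).partrec
    refine h.of_eq_tot fun p => ?_
    by_cases hp : (U p).Dom
    · rw [(hfe' p).1 hp]
      simp only [g, dif_pos hp, cond_true, Part.mem_map_iff]
      exact ⟨_, Part.get_mem hp, rfl⟩
    · have : f p = false := by
        rw [hfe' p] at hp; simpa using hp
      simp [g, hp, this]
  let step : ℕ → ℕ := fun i => Option.casesOn (motive := fun _ => ℕ)
    (Encodable.decode (α := List Bool) i) 0 g
  have hstep : Computable step :=
    Computable.option_casesOn Computable.decode (Computable.const 0) (hg.comp Computable.snd).to₂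
  let A : ℕ → ℕ := fun n => Nat.rec (motive := fun _ => ℕ) 0 (fun i ih => ih + step i) n
  have hA : Computable A := by
    refine Computable.nat_rec (f := fun n : ℕ => n) (h := fun _ x => x.2 + step x.1)
      Computable.id (Computable.const 0) ?_
    exact Primrec.nat_add.to_comp.comp (Computable.snd.comp Computable.snd)
      (hstep.comp (Computable.fst.comp Computable.snd))
  have hAle : ∀ n i, i < n → step i ≤ A n := by
    intro n
    induction n with
    | zero => intro i hi; omega
    | succ n ih =>
      intro i hi
      change step i ≤ A n + step n
      rcases Nat.lt_succ_iff_lt_or_eq.1 hi with h | h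
      · exact (ih i h).trans (Nat.le_add_right _ _)
      · rw [h]; exact Nat.le_add_left _ _
  let s : ℕ → List Bool := fun k => unary (A (lenBound (2 * k) + 1) + 1)
  have hs : Computable s := by
    have h1 : Primrec fun k : ℕ => lenBound (2 * k) + 1 :=
      Primrec.succ.comp (primrec_lenBound.comp Primrec.nat_double)
    exact primrec_unary.to_comp.comp (Computable.succ.comp (hA.comp h1.to_comp))
  obtain ⟨d, hd⟩ := tally_machine hU hs
  obtain ⟨p, hp, hl⟩ := hd (d + 1)
  have hpd : (U p).Dom := Part.dom_iff_mem.2 ⟨_, hp⟩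
  have h1 : g p = (s (d + 1)).length := by
    simp only [g, dif_pos hpd]
    rw [Part.get_eq_of_mem hp hpd]
  have h2 : step (Encodable.encode p) = g p := by
    simp only [step, Encodable.encodek]
  have h3 : Encodable.encode p < lenBound (2 * (d + 1)) + 1 :=
    Nat.lt_succ_of_le ((encode_le_lenBound p).trans (lenBound_mono (by omega)))
  have h4 := hAle _ _ h3
  rw [h2, h1] at h4
  simp only [s, length_unary] at h4
  omega

theorem uniquelyDecodable_of_prefixFree {S : Set (List Bool)}
    (hS : ∀ p ∈ S, ∀ q ∈ S, p <+: q → p = q) (hne : [] ∉ S) :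
    InformationTheory.UniquelyDecodable S := by
  intro L₁
  induction L₁ with
  | nil =>
    intro L₂ _ h2 h
    cases L₂ with
    | nil => rfl
    | cons w L =>
      have : w = [] := by
        simp only [List.flatten_nil, List.flatten_cons] at h
        exact (List.append_eq_nil_iff.1 h.symm).1
      exact absurd (this ▸ h2 w (by simp)) hne
  | cons w L ih =>
    intro L₂ h1 h2 h
    cases L₂ with
    | nil =>
      have : w = [] := by
        simp only [List.flatten_nil, List.flatten_cons] at h
        exact (List.append_eq_nil_iff.1 h).1
      exact absurd (this ▸ h1 w (by simp)) hne
    | cons w' L' =>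
      simp only [List.flatten_cons] at h
      have hw : w ∈ S := h1 w (by simp)
      have hw' : w' ∈ S := h2 w' (by simp)
      have hww : w = w' := by
        have p1 : w <+: w ++ L.flatten := List.prefix_append _ _
        have p2 : w' <+: w ++ L.flatten := h ▸ List.prefix_append _ _
        rcases le_total w.length w'.length with hl | hl
        · exact hS w hw w' hw' (List.prefix_of_prefix_length_le p1 p2 hl)
        · exact (hS w' hw' w hw (List.prefix_of_prefix_length_le p2 p1 hl)).symm
      subst hww
      rw [ih L' (fun x hx => h1 x (by simp [hx])) (fun x hx => h2 x (by simp [hx]))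
        (List.append_cancel_left h)]

theorem dom_facts {U : List Bool →. List Bool} (hU : OptimalMachine U) :
    (∃ p, (U p).Dom) ∧ ¬ (U []).Dom := by
  obtain ⟨d, hd⟩ := tally_machine hU primrec_unary.to_comp
  obtain ⟨p, hp, _⟩ := hd 0
  obtain ⟨q, hq, _⟩ := hd 1
  have hpd : (U p).Dom := Part.dom_iff_mem.2 ⟨_, hp⟩
  have hqd : (U q).Dom := Part.dom_iff_mem.2 ⟨_, hq⟩
  refine ⟨⟨p, hpd⟩, fun h => ?_⟩
  have h1 := hU.2.1 [] p h hpd List.nil_prefix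
  have h2 := hU.2.1 [] q h hqd List.nil_prefix
  rw [← h1] at hp
  rw [← h2] at hq
  have := Part.mem_unique hp hq
  simp [unary] at this

theorem dom_sum {U : List Bool →. List Bool} (hU : OptimalMachine U) {x : ℝ} (hx0 : 0 < x)
    (hx : x < 1 / 2) :
    ∃ Z, HasSum (fun p : {p : List Bool // (U p).Dom} => x ^ (p : List Bool).length) Z ∧
      0 < Z ∧ Z < 1 := by
  classical
  obtain ⟨⟨p0, hp0⟩, hnil⟩ := dom_facts hU
  have hfin : ∀ s : Finset {p : List Bool // (U p).Dom},
      ∑ p ∈ s, x ^ (p : List Bool).length ≤ 2 * x := by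
    intro s
    have hk : ∑ w ∈ s.map (Function.Embedding.subtype _),
        (1 / Fintype.card Bool : ℝ) ^ w.length ≤ 1 := by
      apply InformationTheory.kraft_mcmillan_inequality
      have hd : ∀ q ∈ ((s.map (Function.Embedding.subtype _) : Finset (List Bool)) :
          Set (List Bool)), (U q).Dom := by
        intro q hq
        rw [Finset.mem_coe, Finset.mem_map] at hq
        obtain ⟨⟨a, ha⟩, _, rfl⟩ := hq
        exact ha
      exact uniquelyDecodable_of_prefixFree
        (fun p hp q hq => hU.2.1 p q (hd p hp) (hd q hq)) (fun h => hnil (hd _ h))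
    rw [Finset.sum_map] at hk
    simp only [Function.Embedding.subtype_apply, Fintype.card_bool, Nat.cast_ofNat] at hk
    calc ∑ p ∈ s, x ^ (p : List Bool).length
        ≤ ∑ p ∈ s, (2 * x) * (1 / 2 : ℝ) ^ (p : List Bool).length := by
          refine Finset.sum_le_sum fun p _ => ?_
          have hl : (p : List Bool).length ≠ 0 := by
            intro h
            have := List.eq_nil_of_length_eq_zero h
            exact hnil (this ▸ p.2)
          have e : x ^ (p : List Bool).length
              = (2 * x) ^ (p : List Bool).length * (1 / 2 : ℝ) ^ (p : List Bool).length := by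
            rw [← mul_pow]; congr 1; ring
          rw [e]
          refine mul_le_mul_of_nonneg_right ?_ (by positivity)
          exact pow_le_of_le_one (by positivity) (by linarith) hl
      _ = 2 * x * ∑ p ∈ s, (1 / 2 : ℝ) ^ (p : List Bool).length := by rw [Finset.mul_sum]
      _ ≤ 2 * x * 1 := by gcongr
      _ = 2 * x := by ring
  have hsm : Summable (fun p : {p : List Bool // (U p).Dom} => x ^ (p : List Bool).length) :=
    summable_of_sum_le (fun p => by positivity) hfin
  refine ⟨_, hsm.hasSum, ?_, ?_⟩
  · exact hsm.tsum_pos (fun p => by positivity) ⟨p0, hp0⟩ (by positivity)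
  · refine lt_of_le_of_lt (hsm.tsum_le_of_sum_le hfin) (by linarith)

theorem no_common_fixed_point_Z_F (U : List Bool →. List Bool)
    (hU : OptimalMachine U) :
    ¬ ∃ T : ℝ, 0 < T ∧ T < 1 ∧ ComputableReal (Zfun U T) ∧ ComputableReal (Ffun U T) := by
  rintro ⟨T, hT0, hT1, hZc, hFc⟩
  set x : ℝ := (2 : ℝ) ^ (-1 / T) with hx
  have hx0 : 0 < x := by positivity
  have hxh : x < 1 / 2 := by
    have h1 : (-1 / T : ℝ) < -1 := by
      rw [div_lt_iff₀ hT0]; linarith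
    have h2 := Real.rpow_lt_rpow_of_exponent_lt (by norm_num : (1 : ℝ) < 2) h1
    rw [Real.rpow_neg_one] at h2
    rw [hx]
    linarith
  obtain ⟨Z, hs, hZ0, hZ1⟩ := dom_sum hU hx0 hxh
  have hZe : Zfun U T = Z := by
    rw [← hs.tsum_eq]
    unfold Zfun
    refine tsum_congr fun p => ?_
    rw [hx, ← Real.rpow_natCast, ← Real.rpow_mul (by norm_num)]
    congr 1
    ring
  set F := Ffun U T with hFdef
  have hFe : F = -T * Real.logb 2 Z := by rw [hFdef, Ffun, hZe]
  rw [hZe] at hZc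
  have hlog : Real.logb 2 Z < 0 := Real.logb_neg (by norm_num) hZ0 hZ1
  have hF0 : 0 < F := by rw [hFe]; nlinarith
  have hZF : Z = x ^ F := by
    rw [hx, ← Real.rpow_mul (by norm_num), hFe]
    have : -1 / T * (-T * Real.logb 2 Z) = Real.logb 2 Z := by field_simp
    rw [this, Real.rpow_logb (by norm_num) (by norm_num) hZ0]
  obtain ⟨L, R, D, cL, cR, cD, hD, hL, hR, tL, tR⟩ := approx_exists hZc hZ0
  obtain ⟨Lf, Rf, Df, cLf, _, cDf, hDf, hLf, _, tF, _⟩ := approx_exists hFc hF0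
  obtain ⟨H, hH, hmono, hdom⟩ := halting_stage hU.1
  refine dom_not_decidable hU (ComputablePred.computable_iff_re_compl_re'.2 ⟨hU.1.dom_re, ?_⟩)
  -- the complement of the domain is r.e.
  let W : ℕ → ℕ × ℕ × ℕ × ℕ := Denumerable.ofNat (ℕ × ℕ × ℕ × ℕ)
  let g : List Bool → ℕ → Bool := fun p w =>
    (decide ((W w).2.1 ≤ (W w).2.2.1) && decide (0 < (W w).2.2.1)) &&
    (decide ((W w).2.1 ^ Lf (W w).1 * D (W w).1 ^ Df (W w).1
        < (W w).2.2.1 ^ Lf (W w).1 * L (W w).1 ^ Df (W w).1) &&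
      decide (R (W w).1 * (W w).2.2.1 ^ (W w).2.2.2
        < D (W w).1 * stageSum H (p, (W w).2.1, (W w).2.2.1, (W w).2.2.2)))
  have hg : Computable₂ g := by
    have hW : Computable fun a : List Bool × ℕ => W a.2 :=
      (Computable.ofNat _).comp Computable.snd
    have hn : Computable fun a : List Bool × ℕ => (W a.2).1 := Computable.fst.comp hW
    have hu : Computable fun a : List Bool × ℕ => (W a.2).2.1 :=
      Computable.fst.comp (Computable.snd.comp hW)
    have hv : Computable fun a : List Bool × ℕ => (W a.2).2.2.1 :=
      Computable.fst.comp (Computable.snd.comp (Computable.snd.comp hW))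
    have hk : Computable fun a : List Bool × ℕ => (W a.2).2.2.2 :=
      Computable.snd.comp (Computable.snd.comp (Computable.snd.comp hW))
    have hle : Computable₂ fun a b : ℕ => decide (a ≤ b) := Primrec.nat_le.decide.to_comp
    have hlt : Computable₂ fun a b : ℕ => decide (a < b) := Primrec.nat_lt.decide.to_comp
    have hpow : Computable₂ fun a b : ℕ => a ^ b := primrec_pow.to_comp
    have hmul : Computable₂ fun a b : ℕ => a * b := Primrec.nat_mul.to_comp
    have hand : Computable₂ and := Primrec.and.to_comp
    have hS : Computable fun a : List Bool × ℕ =>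
        stageSum H (a.1, (W a.2).2.1, (W a.2).2.2.1, (W a.2).2.2.2) :=
      (primrec_stageSum hH).to_comp.comp
        (Computable.fst.pair (hu.pair (hv.pair hk)))
    exact hand.comp
      (hand.comp (hle.comp hu hv) (hlt.comp (Computable.const 0) hv))
      (hand.comp
        (hlt.comp
          (hmul.comp (hpow.comp hu (cLf.comp hn)) (hpow.comp (cD.comp hn) (cDf.comp hn)))
          (hmul.comp (hpow.comp hv (cLf.comp hn)) (hpow.comp (cL.comp hn) (cDf.comp hn))))
        (hlt.comp (hmul.comp (cR.comp hn) (hpow.comp hv hk)) (hmul.comp (cD.comp hn) hS)))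
  refine (re_exists hg).of_eq fun p => ?_
  rw [nondom_iff hmono hdom hx0 (by linarith) hF0 hZF hs hD hL hR hDf hLf tL tR tF p]
  constructor
  · rintro ⟨w, hw⟩
    simp only [g, Bool.and_eq_true, decide_eq_true_eq] at hw
    exact ⟨(W w).1, (W w).2.1, (W w).2.2.1, (W w).2.2.2, hw.1.1, hw.1.2, hw.2.1, hw.2.2⟩
  · rintro ⟨n, u, v, k, h1, h2, h3, h4⟩
    refine ⟨Encodable.encode (n, u, v, k), ?_⟩
    have hWe : W (Encodable.encode (n, u, v, k)) = (n, u, v, k) := Denumerable.ofNat_encode _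
    simp only [g, hWe, Bool.and_eq_true, decide_eq_true_eq]
    exact ⟨⟨h1, h2⟩, h3, h4⟩
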